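/- Let Z be a subset system and P a poset whose Z-Scott topology is lower hereditary. If P is weak s_Z-continuous and ↟_Z^x y ∈ Z(↓x) for every x ∈ P and every y ∈ ↓x, then the subposet ↓x is s_Z-continuous for every x ∈ P. -/

import Mathlib

/-!
The key point is that cuts formed in a principal ideal `↓x` agree with cuts formed in `P`:
for `S ∈ Z(↓x)` and an upper bound `z` of `S` in `P`, the set `↓z` lies in `Γ^Z(P)`, so by lower
heredity `↓z ∩ ↓x` lies in `Γ^Z(↓x)`; it contains `S`, hence the cut of `S` in `↓x`.
Consequently `m ≪_Z y` in `P` implies `m ≪_Z y` in `↓x` for `m, y ≤ x`, and weak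
`s_Z`-continuity passes from `P` to `↓x`. Since `↟_Z^x y` is a lower set belonging to `Z(↓x)`,
it is its own down-closure, which gives `s_Z`-continuity.
-/

open Set

/-- A subset system on the category of posets. -/
structure SubsetSystem : Type 1 where
  Z : ∀ (P : Type) [PartialOrder P], Set (Set P)
  singleton_mem : ∀ (P : Type) [PartialOrder P] (x : P), {x} ∈ Z P
  image_mem : ∀ (P : Type) [PartialOrder P] (Q : Type) [PartialOrder Q]
    (f : P → Q), Monotone f → ∀ S ∈ Z P, f '' S ∈ Z Q

/-- The cut operator `A^δ = A^{ul}`. -/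
def cutOp {P : Type} [PartialOrder P] (A : Set P) : Set P :=
  lowerBounds (upperBounds A)

/-- The down-closure `↓A`. -/
def dSet {P : Type} [PartialOrder P] (A : Set P) : Set P := {p | ∃ a ∈ A, p ≤ a}

/-- The up-closure `↑A`. -/
def uSet {P : Type} [PartialOrder P] (A : Set P) : Set P := {p | ∃ a ∈ A, a ≤ p}

/-- The subbasic open sets `σ^Z(P)`. -/
def sigmaZ (Z : SubsetSystem) (P : Type) [PartialOrder P] : Set (Set P) :=
  {U | ∀ S ∈ Z.Z P, (cutOp S ∩ U).Nonempty → (S ∩ U).Nonempty}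

/-- The subbasic closed sets `Γ^Z(P)`. -/
def GammaZ (Z : SubsetSystem) (P : Type) [PartialOrder P] : Set (Set P) :=
  {A | ∀ S ∈ Z.Z P, S ⊆ A → cutOp S ⊆ A}

/-- The closure `cl_{σ^Z(P)}(M)`. -/
def clZ (Z : SubsetSystem) {P : Type} [PartialOrder P] (M : Set P) : Set P :=
  ⋂₀ {A | A ∈ GammaZ Z P ∧ M ⊆ A}

/-- `P` is weakly meet `s_Z`-continuous. -/
def WMSZ (Z : SubsetSystem) (P : Type) [PartialOrder P] : Prop :=
  ∀ x : P, ∀ D ∈ Z.Z P, x ∈ cutOp D → x ∈ clZ Z (Set.Iic x ∩ dSet D)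

/-- `A ≪_Z B`. -/
def wayBelowZ (Z : SubsetSystem) {P : Type} [PartialOrder P] (A B : Set P) : Prop :=
  ∀ S ∈ Z.Z P, (cutOp S ∩ uSet B).Nonempty → (S ∩ uSet A).Nonempty

/-- `↟_Z x = {y : y ≪_Z x}`. -/
def ddArrow (Z : SubsetSystem) {P : Type} [PartialOrder P] (x : P) : Set P :=
  {y | wayBelowZ Z {y} {x}}

/-- `P` is weak `s_Z`-continuous. -/
def WeakSZCont (Z : SubsetSystem) (P : Type) [PartialOrder P] : Prop :=
  ∀ x : P, x ∈ cutOp (ddArrow Z x)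

/-- `P` is `s_Z`-continuous. -/
def SZCont (Z : SubsetSystem) (P : Type) [PartialOrder P] : Prop :=
  WeakSZCont Z P ∧ ∀ x : P, ∃ S ∈ Z.Z P, ddArrow Z x = dSet S

/-- `f` is `σ^Z`-continuous. -/
def SigmaZCont (Z : SubsetSystem) {P Q : Type} [PartialOrder P] [PartialOrder Q]
    (f : P → Q) : Prop :=
  ∀ A ∈ GammaZ Z Q, f ⁻¹' A ∈ GammaZ Z P

/-- The interior w.r.t. the subbasic opens `σ^Z(P)`. -/
def intZ (Z : SubsetSystem) {P : Type} [PartialOrder P] (A : Set P) : Set P :=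
  ⋃₀ {U | U ∈ sigmaZ Z P ∧ U ⊆ A}

/-- `Fin P = {↑F : F ⊆_f P}` ordered by reverse inclusion. -/
def FinP (P : Type) [PartialOrder P] : Type :=
  {A : Set P // ∃ F : Set P, F.Finite ∧ A = uSet F}

instance (P : Type) [PartialOrder P] : PartialOrder (FinP P) :=
  PartialOrder.lift (fun A => OrderDual.toDual A.1)
    (fun A B h => Subtype.ext (OrderDual.toDual.injective h))

/-- The set of minimal elements of `A`. -/
def minSet {P : Type} [PartialOrder P] (A : Set P) : Set P :=
  {x ∈ A | ∀ y ∈ A, y ≤ x → y = x}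

/-- `ω_Z(x) = {F finite : F ≪_Z x}`. -/
def omegaZ (Z : SubsetSystem) {P : Type} [PartialOrder P] (x : P) : Set (Set P) :=
  {F | F.Finite ∧ wayBelowZ Z F {x}}

/-- `P` is `s_Z`-quasicontinuous. -/
def SZQuasi (Z : SubsetSystem) (P : Type) [PartialOrder P] : Prop :=
  ∀ p : P,
    {A : FinP P | ∃ F ∈ omegaZ Z p, A.1 = uSet F} ∈ Z.Z (FinP P) ∧
    Set.Ici p = ⋂ F ∈ omegaZ Z p, uSet F

/-- `Z` has the Rudin property. -/
def RudinProp (Z : SubsetSystem) : Prop :=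
  ∀ (P : Type) [PartialOrder P], ∀ E : Set P, IsUpperSet E →
    ∀ G ∈ Z.Z (FinP P), (∀ A ∈ G, A.1 ≠ (∅ : Set P)) →
    (⋂ A ∈ G, A.1) ⊆ E →
    ∃ K : Set P,
      K ⊆ (⋃ A ∈ G, minSet A.1) ∧
      (∀ A ∈ G, (K ∩ minSet A.1).Nonempty) ∧
      K ∈ Z.Z P ∧
      (⋂ k ∈ K, Set.Ici k) ⊆ E ∧
      ∀ A ∈ G, ∀ B ∈ G, A.1 ⊆ B.1 →
        K ∩ minSet A.1 ⊆ uSet (K ∩ minSet B.1)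

/-- `Z` is union complete. -/
def UnionComplete (Z : SubsetSystem) : Prop :=
  ∀ (P : Type) [PartialOrder P], ∀ S ∈ Z.Z ↥(Z.Z P), (⋃ D ∈ S, D.1) ∈ Z.Z P

/-- `Z` has the finite family union property. -/
def FFUP (Z : SubsetSystem) : Prop :=
  ∀ (P : Type) [PartialOrder P], ∀ (n : ℕ) (S : Fin n → Set (FinP P)),
    (∀ i, S i ∈ Z.Z (FinP P)) →
    {A : FinP P | ∃ g : Fin n → FinP P, (∀ i, g i ∈ S i) ∧ A.1 = ⋃ i, (g i).1} ∈
      Z.Z (FinP P)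

/-- `Z` has property M. -/
def PropM (Z : SubsetSystem) : Prop :=
  ∀ (P : Type) [PartialOrder P], ∀ A : FinP P, {B : FinP P | A.1 ⊆ B.1} ∈ Z.Z (FinP P)

/-- The lower topology `ω(P)`, generated by the complements of principal filters. -/
def lowerTop (P : Type) [PartialOrder P] : TopologicalSpace P :=
  TopologicalSpace.generateFrom {s | ∃ a : P, s = (Set.Ici a)ᶜ}

/-- The relative cut `E^δ|_A`. -/
def cutIn {P : Type} [PartialOrder P] (E A : Set P) : Set P :=
  {p ∈ A | ∀ m ∈ upperBounds E ∩ A, p ≤ m}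

/-- `Z` is subset hereditary. -/
def SubsetHered (Z : SubsetSystem) : Prop :=
  ∀ (P : Type) [PartialOrder P] (Q : Type) [PartialOrder Q] (f : P → Q),
    (∀ x y : P, f x ≤ f y ↔ x ≤ y) → ∀ D : Set P, (D ∈ Z.Z P ↔ f '' D ∈ Z.Z Q)

/-- The `Z`-Scott topology on `P` is lower hereditary. -/
def LowerHered (Z : SubsetSystem) (P : Type) [PartialOrder P] : Prop :=
  ∀ A ∈ GammaZ Z P,
    GammaZ Z ↥A = {C : Set ↥A | ∃ B ∈ GammaZ Z P, C = Subtype.val ⁻¹' B}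

/-- `x ≺_Z y` (the `Z`-beneath relation). -/
def beneathZ (Z : SubsetSystem) {P : Type} [PartialOrder P] (x y : P) : Prop :=
  ∀ A ∈ GammaZ Z P, y ∈ cutOp A → x ∈ A

/-- `P` is `δ_Z`-continuous. -/
def DeltaZCont (Z : SubsetSystem) (P : Type) [PartialOrder P] : Prop :=
  ∀ a : P, a ∈ cutOp {m | beneathZ Z m a}

/-- `k_Z(L)`: the set of `Z`-compact elements. -/
def kZ (Z : SubsetSystem) (L : Type) [PartialOrder L] : Set L :=
  {x | beneathZ Z x x}

lemma Iic_mem_GammaZ (Z : SubsetSystem) {P : Type} [PartialOrder P] (x : P) :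
    Set.Iic x ∈ GammaZ Z P :=
  fun _ _ hS _ hp => hp hS

/-- Under lower heredity, an element of the cut of `S ∈ Z(↓x)` computed in `↓x` lies in the cut
of `S` computed in `P`. -/
lemma val_mem_cutOp_image (Z : SubsetSystem) {P : Type} [PartialOrder P]
    (hL : LowerHered Z P) (x : P) {S : Set ↥(Set.Iic x)} (hS : S ∈ Z.Z ↥(Set.Iic x))
    {y : ↥(Set.Iic x)} (hy : y ∈ cutOp S) : (y : P) ∈ cutOp (Subtype.val '' S) := by
  intro z hz
  have hB : (Subtype.val ⁻¹' Set.Iic z : Set ↥(Set.Iic x)) ∈ GammaZ Z ↥(Set.Iic x) := by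
    rw [hL _ (Iic_mem_GammaZ Z x)]
    exact ⟨_, Iic_mem_GammaZ Z z, rfl⟩
  exact hB S hS (fun s hs => hz ⟨s, hs, rfl⟩) hy

lemma wayBelowZ_Iic (Z : SubsetSystem) {P : Type} [PartialOrder P]
    (hL : LowerHered Z P) (x : P) {m y : ↥(Set.Iic x)}
    (hm : wayBelowZ Z {(m : P)} {(y : P)}) : wayBelowZ Z {m} {y} := by
  rintro S hS ⟨p, hp, _, rfl, hyp⟩
  obtain ⟨_, ⟨s, hs, rfl⟩, _, rfl, hms⟩ :=
    hm _ (Z.image_mem _ _ Subtype.val (Subtype.mono_coe _) S hS)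
      ⟨p, val_mem_cutOp_image Z hL x hS hp, _, rfl, hyp⟩
  exact ⟨s, hs, _, rfl, hms⟩

/-- Testing `m ≪_Z y` on the singleton `{y}` gives `m ≤ y`. -/
lemma le_of_wayBelowZ (Z : SubsetSystem) {P : Type} [PartialOrder P] {m y : P}
    (hm : wayBelowZ Z {m} {y}) : m ≤ y := by
  obtain ⟨_, rfl, _, rfl, hmy⟩ :=
    hm {y} (Z.singleton_mem P y) ⟨y, fun _ hz => hz rfl, y, rfl, le_rfl⟩
  exact hmy

/-- if `P` has a lower hereditary `Z`-Scott topology, is weak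
`s_Z`-continuous, and `↟_Z^x y ∈ Z(↓x)` for all `x` and `y ∈ ↓x`, then each `↓x` is
`s_Z`-continuous. -/
theorem stmt11 (Z : SubsetSystem) (P : Type) [PartialOrder P]
    (hL : LowerHered Z P) (hw : WeakSZCont Z P)
    (h : ∀ x : P, ∀ y : ↥(Set.Iic x), ddArrow Z y ∈ Z.Z ↥(Set.Iic x)) :
    ∀ x : P, SZCont Z ↥(Set.Iic x) := by
  intro x
  refine ⟨fun y z hz => ?_, fun y => ⟨_, h x y, ?_⟩⟩
  · refine hw (y : P) fun m hm => ?_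
    have hmx : m ≤ x := (le_of_wayBelowZ Z hm).trans y.2
    exact hz (wayBelowZ_Iic Z hL x (m := ⟨m, hmx⟩) hm)
  · ext m
    refine ⟨fun hm => ⟨m, hm, le_rfl⟩, ?_⟩
    rintro ⟨a, ha, hma⟩ S hS hc
    obtain ⟨s, hs, _, rfl, has⟩ := ha S hS hc
    exact ⟨s, hs, m, rfl, hma.trans has⟩
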